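/- arXiv:1310.7308 — 2 statements merged into one kernel-verified Lean document; each statement's English description precedes it below -/
import Mathlib

section
/- Let G be a simple graph on n vertices with domination number γ, where 2 ≤ γ ≤ n−1. Then the Laplacian spectral radius of G satisfies μ(G) ≤ n − γ + 2; equivalently, every eigenvalue of the Laplacian matrix L(G) is at most n − γ + 2. -/
/-!
Let `x` be an eigenvector for `μ ≠ 0`, maximal at `u` and minimal at `v`; it is not constant, as
constants lie in the kernel of the Laplacian. Subtracting the eigenvalue equation at `v` from the
one at `u` gives
`μ (x u - x v) = ∑_{w ∈ N(u)} (x u - x w) + ∑_{w ∈ N(v)} (x w - x v)`. All summands are nonnegative,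
so both sums may be extended to `N(u) ∪ N(v)`, where they add up to `|N(u) ∪ N(v)| (x u - x v)`.
On the other hand, the complement of `(N(u) ∪ N(v)) \ {u, v}` is a dominating set, so
`μ ≤ |N(u) ∪ N(v)| ≤ n - γ + 2`.
-/

open SimpleGraph Matrix

/-- `S` is a dominating set of `G`: every vertex outside `S` has a neighbor in `S`. -/
def IsDominatingSet {V : Type*} (G : SimpleGraph V) (S : Set V) : Prop :=
  ∀ v : V, v ∉ S → ∃ u ∈ S, G.Adj u v

/-- The domination number of a finite graph: the minimum cardinality of a dominating set. -/
noncomputable def dominationNumber {V : Type*} [Fintype V] (G : SimpleGraph V) : ℕ :=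
  sInf {k : ℕ | ∃ S : Finset V, S.card = k ∧ IsDominatingSet G (S : Set V)}

section Domination

variable {V : Type*}

lemma isDominatingSet_compl_iUnion_neighborSet_diff (G : SimpleGraph V) (S : Set V) :
    IsDominatingSet G ((⋃ v ∈ S, G.neighborSet v) \ S)ᶜ := by
  intro w hw
  obtain ⟨u, huS, huw⟩ := Set.mem_iUnion₂.mp (Set.notMem_compl_iff.mp hw).1
  exact ⟨u, fun hu => hu.2 huS, huw⟩

variable [Fintype V]

lemma dominationNumber_le_card {G : SimpleGraph V} {S : Finset V}
    (hS : IsDominatingSet G (S : Set V)) : dominationNumber G ≤ S.card :=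
  Nat.sInf_le ⟨S, rfl, hS⟩

variable [DecidableEq V] (G : SimpleGraph V) [DecidableRel G.Adj]

lemma dominationNumber_add_card_biUnion_neighborFinset_sdiff_le (S : Finset V) :
    dominationNumber G + ((S.biUnion fun v => G.neighborFinset v) \ S).card ≤
      Fintype.card V := by
  rw [← Finset.card_compl_add_card ((S.biUnion fun v => G.neighborFinset v) \ S)]
  gcongr
  apply dominationNumber_le_card
  simpa using isDominatingSet_compl_iUnion_neighborSet_diff G (S : Set V)

lemma dominationNumber_add_card_neighborFinset_union_le (u v : V) :
    dominationNumber G + (G.neighborFinset u ∪ G.neighborFinset v).card ≤ Fintype.card V + 2 := by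
  have hpair : ({u, v} : Finset V).card ≤ 2 := Finset.card_le_two
  have hsdiff : (G.neighborFinset u ∪ G.neighborFinset v).card ≤
      ((G.neighborFinset u ∪ G.neighborFinset v) \ {u, v}).card + ({u, v} : Finset V).card :=
    Finset.card_le_card_sdiff_add_card
  have hdom := dominationNumber_add_card_biUnion_neighborFinset_sdiff_le G {u, v}
  rw [Finset.biUnion_insert, Finset.singleton_biUnion] at hdom
  omega

end Domination

section Laplacian

variable {V R : Type*} [Fintype V] [DecidableEq V] (G : SimpleGraph V) [DecidableRel G.Adj]

lemma lapMatrix_mulVec_apply_eq_sum_sub [NonAssocRing R] (x : V → R) (v : V) :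
    (G.lapMatrix R *ᵥ x) v = ∑ w ∈ G.neighborFinset v, (x v - x w) := by
  rw [lapMatrix_mulVec_apply, Finset.sum_sub_distrib, Finset.sum_const,
    card_neighborFinset_eq_degree, nsmul_eq_mul]

lemma lapMatrix_mulVec_sub_le_card_mul_sub [NonAssocRing R] [PartialOrder R]
    [IsOrderedAddMonoid R] {x : V → R} {u v : V}
    (hu : ∀ w, x w ≤ x u) (hv : ∀ w, x v ≤ x w) :
    (G.lapMatrix R *ᵥ x) u - (G.lapMatrix R *ᵥ x) v ≤
      (G.neighborFinset u ∪ G.neighborFinset v).card * (x u - x v) := by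
  calc (G.lapMatrix R *ᵥ x) u - (G.lapMatrix R *ᵥ x) v
    _ = ∑ w ∈ G.neighborFinset u, (x u - x w) + ∑ w ∈ G.neighborFinset v, (x w - x v) := by
        simp only [lapMatrix_mulVec_apply_eq_sum_sub, sub_eq_add_neg, ← Finset.sum_neg_distrib,
          neg_add, neg_neg, add_comm]
    _ ≤ ∑ w ∈ G.neighborFinset u ∪ G.neighborFinset v, (x u - x w) +
          ∑ w ∈ G.neighborFinset u ∪ G.neighborFinset v, (x w - x v) :=
        add_le_add
          (Finset.sum_le_sum_of_subset_of_nonneg Finset.subset_union_left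
            fun w _ _ => sub_nonneg.mpr (hu w))
          (Finset.sum_le_sum_of_subset_of_nonneg Finset.subset_union_right
            fun w _ _ => sub_nonneg.mpr (hv w))
    _ = (G.neighborFinset u ∪ G.neighborFinset v).card * (x u - x v) := by
        simp only [← Finset.sum_add_distrib, sub_add_sub_cancel, Finset.sum_const, nsmul_eq_mul]

variable {G}

lemma exists_lt_of_lapMatrix_mulVec_eq_smul [Ring R] [NoZeroDivisors R] [LinearOrder R]
    {μ : R} {x : V → R} (hμ : μ ≠ 0) (hx : x ≠ 0)
    (hLx : G.lapMatrix R *ᵥ x = μ • x) : ∃ a b, x a < x b := by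
  by_contra! hconst
  refine hx (funext fun a => (mul_eq_zero.mp ?_).resolve_left hμ)
  calc μ * x a = (G.lapMatrix R *ᵥ x) a := (congrFun hLx a).symm
    _ = ∑ b ∈ G.neighborFinset a, (x a - x b) := lapMatrix_mulVec_apply_eq_sum_sub G x a
    _ = 0 := Finset.sum_eq_zero fun b _ =>
        sub_eq_zero.mpr (le_antisymm (hconst b a) (hconst a b))

variable [CommRing R] [LinearOrder R] [IsStrictOrderedRing R] {μ : R}

lemma exists_le_card_neighborFinset_union_of_hasEigenvalue_lapMatrix
    (hμ : Module.End.HasEigenvalue (Matrix.toLin' (G.lapMatrix R)) μ) :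
    ∃ u v, μ ≤ (G.neighborFinset u ∪ G.neighborFinset v).card := by
  obtain ⟨x, hx⟩ := hμ.exists_hasEigenvector
  have hLx : G.lapMatrix R *ᵥ x = μ • x := hx.apply_eq_smul
  obtain ⟨i, -⟩ := Function.ne_iff.mp hx.2
  have : Nonempty V := ⟨i⟩
  obtain ⟨u, hu⟩ := Finite.exists_max x
  obtain ⟨v, hv⟩ := Finite.exists_min x
  refine ⟨u, v, ?_⟩
  rcases eq_or_ne μ 0 with rfl | hμ0
  · exact Nat.cast_nonneg _
  obtain ⟨a, b, hab⟩ := exists_lt_of_lapMatrix_mulVec_eq_smul hμ0 hx.2 hLx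
  have hvu : x v < x u := (hv a).trans_lt (hab.trans_le (hu b))
  refine le_of_mul_le_mul_right ?_ (sub_pos.mpr hvu)
  calc μ * (x u - x v) = (G.lapMatrix R *ᵥ x) u - (G.lapMatrix R *ᵥ x) v := by
        simp only [hLx, Pi.smul_apply, smul_eq_mul, mul_sub]
    _ ≤ (G.neighborFinset u ∪ G.neighborFinset v).card * (x u - x v) :=
        lapMatrix_mulVec_sub_le_card_mul_sub G hu hv

theorem laplacian_eigenvalue_le_of_dominationNumber_general
    (hμ : Module.End.HasEigenvalue (Matrix.toLin' (G.lapMatrix R)) μ) :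
    μ ≤ (Fintype.card V : R) - dominationNumber G + 2 := by
  obtain ⟨u, v, hμuv⟩ := exists_le_card_neighborFinset_union_of_hasEigenvalue_lapMatrix hμ
  have hcard : (dominationNumber G : R) + (G.neighborFinset u ∪ G.neighborFinset v).card ≤
      Fintype.card V + 2 :=
    mod_cast dominationNumber_add_card_neighborFinset_union_le G u v
  linarith

end Laplacian

theorem laplacian_eigenvalue_le_of_dominationNumber
    {V : Type*} [Fintype V] [DecidableEq V] (G : SimpleGraph V) [DecidableRel G.Adj]
    (n γ : ℕ) (hn : Fintype.card V = n) (hγ : dominationNumber G = γ)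
    (hγ2 : 2 ≤ γ) (hγn : γ ≤ n - 1)
    (μ : ℝ) (hμ : Module.End.HasEigenvalue (Matrix.toLin' (G.lapMatrix ℝ)) μ) :
    μ ≤ (n : ℝ) - γ + 2 := by
  subst hn hγ
  exact laplacian_eigenvalue_le_of_dominationNumber_general hμ
end

section
/- Let n and γ be integers with 2 ≤ γ ≤ n−1, and let a be an integer with 2 ≤ a and 2 ≤ n−γ+2−a. Then the graph G = K_{a, n−γ+2−a} ∪ (γ−2)K_1, the vertex-disjoint union of the complete bipartite graph with part sizes a and n−γ+2−a together with γ−2 isolated vertices, has n vertices, domination number γ, and its Laplacian spectral radius equals n − γ + 2; in particular n − γ + 2 is an eigenvalue of L(G) and every eigenvalue of L(G) is at most n − γ + 2. -/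
open SimpleGraph Matrix

/-!
The domination number is additive over disjoint unions, equals `|ι|` on the edgeless graph on `ι`,
and equals `2` on a complete bipartite graph with nontrivial sides: one vertex from each side
dominates, while no single vertex is adjacent to all others.

The Laplacian of a disjoint union is block diagonal, so its spectrum is the union of the spectra;
isolated vertices only contribute the eigenvalue `0`, which every nonempty graph has. For any graph
on `V`, extending the sum in `xᵀ L x = ½ ∑_{i ~ j} (x i - x j)²` to all pairs gives
`xᵀ L x ≤ |V| xᵀ x - (∑ i, x i)²`, so every Laplacian eigenvalue is at most `|V|`. On a complete
bipartite graph this bound is attained, by the vector `|W|` on `V` and `-|V|` on `W`.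
-/

section Domination

variable {V W : Type*} {G : SimpleGraph V} {H : SimpleGraph W}

lemma IsDominatingSet.mono {S T : Set V} (hS : IsDominatingSet G S) (hST : S ⊆ T) :
    IsDominatingSet G T := fun v hv ↦
  let ⟨u, hu, huv⟩ := hS v fun h ↦ hv (hST h)
  ⟨u, hST hu, huv⟩

lemma isDominatingSet_univ : IsDominatingSet G Set.univ :=
  fun v hv ↦ (hv (Set.mem_univ v)).elim

lemma isDominatingSet_singleton {v : V} : IsDominatingSet G {v} ↔ G.IsUniversal v := by
  simp only [IsDominatingSet, IsUniversal, Set.mem_singleton_iff, exists_eq_left,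
    ne_comm (b := v)]

lemma isDominatingSet_bot {S : Set V} :
    IsDominatingSet (⊥ : SimpleGraph V) S ↔ S = Set.univ := by
  simp [IsDominatingSet, Set.eq_univ_iff_forall]

lemma isDominatingSet_disjSum {S : Finset V} {T : Finset W} :
    IsDominatingSet (G ⊕g H) (S.disjSum T : Set (V ⊕ W)) ↔
      IsDominatingSet G (S : Set V) ∧ IsDominatingSet H (T : Set W) := by
  simp [IsDominatingSet]

lemma isDominatingSet_completeBipartiteGraph_pair (v : V) (w : W) :
    IsDominatingSet (completeBipartiteGraph V W) {Sum.inl v, Sum.inr w} := by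
  rintro (v' | w') -
  · exact ⟨Sum.inr w, by simp, by simp⟩
  · exact ⟨Sum.inl v, by simp, by simp⟩

lemma not_isUniversal_completeBipartiteGraph [Nontrivial V] [Nontrivial W] (u : V ⊕ W) :
    ¬(completeBipartiteGraph V W).IsUniversal u := by
  intro hu
  rcases u with v | w
  · obtain ⟨v', hne⟩ := exists_ne v
    simpa using hu (w := Sum.inl v') (by simpa using hne.symm)
  · obtain ⟨w', hne⟩ := exists_ne w
    simpa using hu (w := Sum.inr w') (by simpa using hne.symm)

variable [Fintype V] [Fintype W]

lemma IsDominatingSet.dominationNumber_le {S : Finset V} (hS : IsDominatingSet G (S : Set V)) :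
    dominationNumber G ≤ S.card :=
  Nat.sInf_le ⟨S, rfl, hS⟩

variable (G) in
lemma exists_isDominatingSet_card_eq_dominationNumber :
    ∃ S : Finset V, S.card = dominationNumber G ∧ IsDominatingSet G (S : Set V) :=
  Nat.sInf_mem (s := {k | ∃ S : Finset V, S.card = k ∧ IsDominatingSet G (S : Set V)})
    ⟨_, Finset.univ, rfl, by simpa only [Finset.coe_univ] using isDominatingSet_univ⟩

lemma dominationNumber_sum :
    dominationNumber (G ⊕g H) = dominationNumber G + dominationNumber H := by
  apply le_antisymm
  · obtain ⟨S, hScard, hS⟩ := exists_isDominatingSet_card_eq_dominationNumber G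
    obtain ⟨T, hTcard, hT⟩ := exists_isDominatingSet_card_eq_dominationNumber H
    rw [← hScard, ← hTcard, ← Finset.card_disjSum]
    exact (isDominatingSet_disjSum.2 ⟨hS, hT⟩).dominationNumber_le
  · obtain ⟨S, hScard, hS⟩ := exists_isDominatingSet_card_eq_dominationNumber (G ⊕g H)
    rw [← S.toLeft_disjSum_toRight, isDominatingSet_disjSum] at hS
    rw [← hScard, ← Finset.card_toLeft_add_card_toRight]
    exact add_le_add hS.1.dominationNumber_le hS.2.dominationNumber_le

variable (V) in
lemma dominationNumber_bot : dominationNumber (⊥ : SimpleGraph V) = Fintype.card V := by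
  obtain ⟨S, hScard, hS⟩ := exists_isDominatingSet_card_eq_dominationNumber (⊥ : SimpleGraph V)
  rw [← hScard, Finset.coe_eq_univ.1 (isDominatingSet_bot.1 hS), Finset.card_univ]

lemma two_le_dominationNumber [Nonempty V] (hG : ∀ v, ¬G.IsUniversal v) :
    2 ≤ dominationNumber G := by
  obtain ⟨S, hScard, hS⟩ := exists_isDominatingSet_card_eq_dominationNumber G
  rw [← hScard]
  by_contra! hlt
  obtain ⟨v, hv⟩ := Finset.card_le_one_iff_subset_singleton.1 (Nat.le_of_lt_succ hlt)
  exact hG v (isDominatingSet_singleton.1 (hS.mono (by exact_mod_cast hv)))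

variable (V W) in
lemma dominationNumber_completeBipartiteGraph [Nontrivial V] [Nontrivial W] :
    dominationNumber (completeBipartiteGraph V W) = 2 := by
  classical
  apply le_antisymm
  · obtain ⟨v⟩ := ‹Nontrivial V›.to_nonempty
    obtain ⟨w⟩ := ‹Nontrivial W›.to_nonempty
    have hvw : IsDominatingSet (completeBipartiteGraph V W)
        (({Sum.inl v, Sum.inr w} : Finset (V ⊕ W)) : Set (V ⊕ W)) := by
      simpa using isDominatingSet_completeBipartiteGraph_pair v w
    exact hvw.dominationNumber_le.trans Finset.card_le_two
  · exact two_le_dominationNumber not_isUniversal_completeBipartiteGraph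

end Domination

lemma sum_sum_sub_sq {ι R : Type*} [Fintype ι] [CommRing R] (x : ι → R) :
    ∑ i, ∑ j, (x i - x j) ^ 2 = 2 * (Fintype.card ι * (x ⬝ᵥ x) - (∑ i, x i) ^ 2) := by
  have hx : x ⬝ᵥ x = ∑ i, x i ^ 2 := by simp only [dotProduct, sq]
  simp only [sub_sq, Finset.sum_add_distrib, Finset.sum_sub_distrib, Finset.sum_const,
    Finset.card_univ, nsmul_eq_mul, ← Finset.mul_sum, ← Finset.sum_mul, hx]
  ring

section MatrixSpectrum

variable {m n R K : Type*} [Fintype m] [DecidableEq m] [Fintype n] [DecidableEq n]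

lemma spectrum_fromBlocks_zero₁₂ [CommRing R] (A : Matrix m m R) (C : Matrix n m R)
    (D : Matrix n n R) :
    spectrum R (fromBlocks A 0 C D) = spectrum R A ∪ spectrum R D := by
  ext μ
  simp only [Set.mem_union, mem_spectrum_iff_not_isUnit_eval_charpoly, charpoly_fromBlocks_zero₁₂,
    Polynomial.eval_mul, IsUnit.mul_iff, not_and_or]

lemma mem_spectrum_iff_exists_mulVec_eq_smul [Field K] {A : Matrix n n K} {μ : K} :
    μ ∈ spectrum K A ↔ ∃ x ≠ 0, A *ᵥ x = μ • x := by
  rw [← spectrum_toLin', ← Module.End.hasEigenvalue_iff_mem_spectrum]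
  constructor
  · intro hμ
    obtain ⟨x, hx⟩ := hμ.exists_hasEigenvector
    exact ⟨x, hx.2, hx.apply_eq_smul⟩
  · rintro ⟨x, hx0, hx⟩
    exact Module.End.hasEigenvalue_of_hasEigenvector
      (Module.End.hasEigenvector_iff.2 ⟨Module.End.mem_eigenspace_iff.2 hx, hx0⟩)

end MatrixSpectrum

section Laplacian

variable {V W : Type*} [Fintype V] [Fintype W]

lemma degree_sum_inl {G : SimpleGraph V} {H : SimpleGraph W} [DecidableRel G.Adj]
    [DecidableRel (G ⊕g H).Adj] (v : V) : (G ⊕g H).degree (Sum.inl v) = G.degree v := by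
  classical
  simp only [← card_neighborSet_eq_degree, neighborSet_sum_inl,
    Set.card_image_of_injective _ Sum.inl_injective]

lemma degree_sum_inr {G : SimpleGraph V} {H : SimpleGraph W} [DecidableRel H.Adj]
    [DecidableRel (G ⊕g H).Adj] (w : W) : (G ⊕g H).degree (Sum.inr w) = H.degree w := by
  classical
  simp only [← card_neighborSet_eq_degree, neighborSet_sum_inr,
    Set.card_image_of_injective _ Sum.inr_injective]

variable [DecidableEq V] [DecidableEq W]

lemma lapMatrix_sum (R : Type*) [AddGroupWithOne R] (G : SimpleGraph V) (H : SimpleGraph W)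
    [DecidableRel G.Adj] [DecidableRel H.Adj] [DecidableRel (G ⊕g H).Adj] :
    (G ⊕g H).lapMatrix R = fromBlocks (G.lapMatrix R) 0 0 (H.lapMatrix R) := by
  ext (i | i) (j | j) <;>
    simp [lapMatrix, degMatrix, adjMatrix_apply, diagonal_apply, degree_sum_inl, degree_sum_inr]

variable (V) in
lemma lapMatrix_bot (R : Type*) [AddGroupWithOne R] [DecidableRel (⊥ : SimpleGraph V).Adj] :
    (⊥ : SimpleGraph V).lapMatrix R = 0 := by
  ext i j
  simp [lapMatrix, degMatrix, adjMatrix_apply]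

lemma lapMatrix_mulVec_apply_eq_sum {R : Type*} [NonAssocRing R] (G : SimpleGraph V)
    [DecidableRel G.Adj] (x : V → R) (v : V) :
    (G.lapMatrix R *ᵥ x) v = ∑ u, if G.Adj v u then x v - x u else 0 := by
  rw [lapMatrix_mulVec_apply, ← Finset.sum_filter, Finset.sum_sub_distrib,
    ← neighborFinset_eq_filter, Finset.sum_const, card_neighborFinset_eq_degree, nsmul_eq_mul]

lemma zero_mem_spectrum_lapMatrix {K : Type*} [Field K] [Nonempty V] (G : SimpleGraph V)
    [DecidableRel G.Adj] : (0 : K) ∈ spectrum K (G.lapMatrix K) :=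
  mem_spectrum_iff_exists_mulVec_eq_smul.2
    ⟨fun _ ↦ 1, one_ne_zero, by rw [lapMatrix_mulVec_const_eq_zero, zero_smul]⟩

lemma spectrum_lapMatrix_sum {R : Type*} [CommRing R] (G : SimpleGraph V) (H : SimpleGraph W)
    [DecidableRel G.Adj] [DecidableRel H.Adj] [DecidableRel (G ⊕g H).Adj] :
    spectrum R ((G ⊕g H).lapMatrix R) =
      spectrum R (G.lapMatrix R) ∪ spectrum R (H.lapMatrix R) := by
  rw [lapMatrix_sum, spectrum_fromBlocks_zero₁₂]

lemma spectrum_lapMatrix_sum_bot {K : Type*} [Field K] [Nonempty V] (G : SimpleGraph V)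
    [DecidableRel G.Adj] [DecidableRel (G ⊕g (⊥ : SimpleGraph W)).Adj] :
    spectrum K ((G ⊕g (⊥ : SimpleGraph W)).lapMatrix K) = spectrum K (G.lapMatrix K) := by
  classical
  rw [spectrum_lapMatrix_sum, lapMatrix_bot, Set.union_eq_left]
  intro μ hμ
  obtain ⟨x, hx0, hx⟩ := mem_spectrum_iff_exists_mulVec_eq_smul.1 hμ
  have hμ0 : μ = 0 := by simpa [eq_comm, hx0] using hx
  exact hμ0 ▸ zero_mem_spectrum_lapMatrix G

section Ordered

variable {K : Type*} [Field K] [LinearOrder K] [IsStrictOrderedRing K]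

lemma dotProduct_lapMatrix_mulVec_le (G : SimpleGraph V) [DecidableRel G.Adj] (x : V → K) :
    x ⬝ᵥ (G.lapMatrix K *ᵥ x) ≤ Fintype.card V * (x ⬝ᵥ x) - (∑ i, x i) ^ 2 := by
  have hpairs : ∑ i, ∑ j, (if G.Adj i j then (x i - x j) ^ 2 else 0) ≤
      ∑ i, ∑ j, (x i - x j) ^ 2 := by
    gcongr with i _ j _
    split_ifs
    exacts [le_rfl, sq_nonneg _]
  rw [← toLinearMap₂'_apply', lapMatrix_toLinearMap₂']
  linarith [sum_sum_sub_sq x]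

lemma le_card_of_mem_spectrum_lapMatrix {G : SimpleGraph V} [DecidableRel G.Adj] {μ : K}
    (hμ : μ ∈ spectrum K (G.lapMatrix K)) : μ ≤ Fintype.card V := by
  obtain ⟨x, hx0, hx⟩ := mem_spectrum_iff_exists_mulVec_eq_smul.1 hμ
  have hpos : 0 < x ⬝ᵥ x :=
    (Finset.sum_nonneg fun i _ ↦ mul_self_nonneg (x i)).lt_of_ne'
      (dotProduct_self_eq_zero.not.2 hx0)
  refine le_of_mul_le_mul_right ?_ hpos
  calc μ * (x ⬝ᵥ x) = x ⬝ᵥ (G.lapMatrix K *ᵥ x) := by rw [hx, dotProduct_smul, smul_eq_mul]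
    _ ≤ Fintype.card V * (x ⬝ᵥ x) - (∑ i, x i) ^ 2 := dotProduct_lapMatrix_mulVec_le G x
    _ ≤ Fintype.card V * (x ⬝ᵥ x) := sub_le_self _ (sq_nonneg _)

end Ordered

section CompleteBipartite

variable [DecidableRel (completeBipartiteGraph V W).Adj]

lemma lapMatrix_completeBipartiteGraph_mulVec_inl {R : Type*} [NonAssocRing R] (x : V ⊕ W → R)
    (v : V) : ((completeBipartiteGraph V W).lapMatrix R *ᵥ x) (Sum.inl v) =
      Fintype.card W * x (Sum.inl v) - ∑ w, x (Sum.inr w) := by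
  simp [lapMatrix_mulVec_apply_eq_sum, Fintype.sum_sum_type]

lemma lapMatrix_completeBipartiteGraph_mulVec_inr {R : Type*} [NonAssocRing R] (x : V ⊕ W → R)
    (w : W) : ((completeBipartiteGraph V W).lapMatrix R *ᵥ x) (Sum.inr w) =
      Fintype.card V * x (Sum.inr w) - ∑ v, x (Sum.inl v) := by
  simp [lapMatrix_mulVec_apply_eq_sum, Fintype.sum_sum_type]

lemma card_mem_spectrum_lapMatrix_completeBipartiteGraph {K : Type*} [Field K] [CharZero K]
    [Nonempty V] [Nonempty W] :
    (Fintype.card (V ⊕ W) : K) ∈ spectrum K ((completeBipartiteGraph V W).lapMatrix K) := by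
  refine mem_spectrum_iff_exists_mulVec_eq_smul.2
    ⟨Sum.elim (fun _ ↦ (Fintype.card W : K)) (fun _ ↦ -(Fintype.card V : K)), ?_, ?_⟩
  · obtain ⟨v⟩ := ‹Nonempty V›
    intro h
    simpa using congrFun h (Sum.inl v)
  · ext (v | w) <;>
      simp only [lapMatrix_completeBipartiteGraph_mulVec_inl,
        lapMatrix_completeBipartiteGraph_mulVec_inr, Sum.elim_inl, Sum.elim_inr, Finset.sum_const,
        Finset.card_univ, nsmul_eq_mul, Pi.smul_apply, smul_eq_mul, Fintype.card_sum,
        Nat.cast_add] <;>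
      ring

lemma isGreatest_spectrum_lapMatrix_completeBipartiteGraph {K : Type*} [Field K] [LinearOrder K]
    [IsStrictOrderedRing K] [Nonempty V] [Nonempty W] :
    IsGreatest (spectrum K ((completeBipartiteGraph V W).lapMatrix K)) (Fintype.card (V ⊕ W)) :=
  ⟨card_mem_spectrum_lapMatrix_completeBipartiteGraph,
    fun _ hμ ↦ le_card_of_mem_spectrum_lapMatrix hμ⟩

end CompleteBipartite

end Laplacian

theorem laplacian_spectral_radius_completeBipartite_union_isolated
    (n γ a : ℕ) (hγ2 : 2 ≤ γ) (hγn : γ ≤ n - 1)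
    (ha : 2 ≤ a) (ha' : 2 ≤ n - γ + 2 - a) :
    ∀ (G : SimpleGraph ((Fin a ⊕ Fin (n - γ + 2 - a)) ⊕ Fin (γ - 2))),
      G = (completeBipartiteGraph (Fin a) (Fin (n - γ + 2 - a))) ⊕g
          (⊥ : SimpleGraph (Fin (γ - 2))) →
      Fintype.card ((Fin a ⊕ Fin (n - γ + 2 - a)) ⊕ Fin (γ - 2)) = n ∧
      dominationNumber G = γ ∧
      (∀ inst : DecidableRel G.Adj,
        Module.End.HasEigenvalue (Matrix.toLin' (G.lapMatrix ℝ)) ((n : ℝ) - γ + 2) ∧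
        ∀ μ : ℝ, Module.End.HasEigenvalue (Matrix.toLin' (G.lapMatrix ℝ)) μ →
          μ ≤ (n : ℝ) - γ + 2) := by
  rintro G rfl
  have : Nontrivial (Fin a) := Fin.nontrivial_iff_two_le.2 ha
  have : Nontrivial (Fin (n - γ + 2 - a)) := Fin.nontrivial_iff_two_le.2 ha'
  refine ⟨?_, ?_, fun inst ↦ ?_⟩
  · simp only [Fintype.card_sum, Fintype.card_fin]
    omega
  · rw [dominationNumber_sum, dominationNumber_completeBipartiteGraph, dominationNumber_bot,
      Fintype.card_fin]
    omega
  · classical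
    have hcard : (Fintype.card (Fin a ⊕ Fin (n - γ + 2 - a)) : ℝ) = n - γ + 2 := by
      rw [Fintype.card_sum, Fintype.card_fin, Fintype.card_fin, Nat.add_sub_cancel' (by omega),
        Nat.cast_add, Nat.cast_sub (by omega), Nat.cast_ofNat]
    simp only [Module.End.hasEigenvalue_iff_mem_spectrum, spectrum_toLin',
      spectrum_lapMatrix_sum_bot, ← hcard]
    exact isGreatest_spectrum_lapMatrix_completeBipartiteGraph
end
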